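/- For every ε > 0, δ > 0 and integer k ≥ 1 there exist constants c > 0 and C > 0 such that the following holds for all sufficiently large n: if m ≥ (2+δ)n and A is a random n×m integer matrix whose entries are independent, ε-balanced, and each supported on integers of absolute value at most 2^(n^k), then the probability that A : ℤ^m → ℤ^n is surjective is at least 1 − C·e^(−cn). -/

import Mathlib

open MeasureTheory Filter

def IsBalanced (ε : ℝ) (ν : Measure ℤ) : Prop :=
  ∀ p : ℕ, p.Prime → ∀ r : ZMod p, ν {x : ℤ | (x : ZMod p) = r} ≤ ENNReal.ofReal (1 - ε)

/-- The law of a random `n × m` integer matrix whose entries are independent with laws `ν i j`: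
the product measure on the space of matrices (viewed as functions `Fin n → Fin m → ℤ`). -/
noncomputable def matrixLaw {n m : ℕ} (ν : Fin n → Fin m → Measure ℤ) :
    Measure (Fin n → Fin m → ℤ) :=
  Measure.pi fun i => Measure.pi fun j => ν i j

/-
Reduce `A` modulo a prime `p` and expose its columns one at a time. As long as the columns seen so
far span a subspace of codimension `r ≥ 1`, the next column stays inside that subspace with
probability at most `(1 - ε) ^ r`, so `(1 + δ/2) n` columns fail to span `(ℤ/pℤ)^n` with a
probability that is exponentially small in `n`, uniformly in `p`.

A union bound over all `p` is impossible; instead, split the columns into two halves. If the first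
half spans modulo `2`, it has a nonzero `n × n` minor, and it can fail to span only modulo the prime
divisors of that minor. By the bound on the entries there are few of these primes, and the
independent second half fails modulo one of them with small probability. Otherwise the columns span
modulo every prime, hence over `ℤ`.
-/

open Module (finrank finrank_pos)
open scoped ENNReal

section Measure

lemma measure_prod_le_of_forall_fiber_le {α β : Type*} [MeasurableSpace α] [MeasurableSpace β]
    {μ : Measure α} [IsProbabilityMeasure μ] {ν : Measure β} [SFinite ν] {S : Set (α × β)}
    (hS : MeasurableSet S) {A : Set α} (hA : MeasurableSet A) {b b' : ℝ≥0∞}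
    (h : ∀ a ∈ A, ν (Prod.mk a ⁻¹' S) ≤ b) (h' : ∀ a ∉ A, ν (Prod.mk a ⁻¹' S) ≤ b') :
    μ.prod ν S ≤ μ A * b + b' := by
  have hfiber : ∀ a, ν (Prod.mk a ⁻¹' S) ≤ A.indicator (fun _ => b) a + b' := by
    intro a
    by_cases ha : a ∈ A
    · simpa [ha] using (h a ha).trans le_self_add
    · simpa [ha] using h' a ha
  calc μ.prod ν S = ∫⁻ a, ν (Prod.mk a ⁻¹' S) ∂μ := Measure.prod_apply hS
    _ ≤ ∫⁻ a, A.indicator (fun _ => b) a + b' ∂μ := lintegral_mono hfiber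
    _ = μ A * b + b' := by
      rw [lintegral_add_right _ measurable_const, lintegral_indicator_const hA, lintegral_const,
        measure_univ, mul_one, mul_comm]

lemma measurePreserving_swap_pi_pi {ι κ : Type*} [Fintype ι] [Fintype κ] {α : Type*}
    [MeasurableSpace α] [Countable α] [MeasurableSingletonClass α] (ν : ι → κ → Measure α)
    [∀ i j, SigmaFinite (ν i j)] :
    MeasurePreserving (fun (x : κ → ι → α) i j => x j i)
      (Measure.pi fun j => Measure.pi fun i => ν i j)
      (Measure.pi fun i => Measure.pi fun j => ν i j) := by
  refine ⟨measurable_of_countable _, Measure.ext_of_singleton fun a => ?_⟩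
  have hpre : (fun (x : κ → ι → α) i j => x j i) ⁻¹' {a} = {fun j i => a i j} := by
    ext x
    simp only [Set.mem_preimage, Set.mem_singleton_iff, funext_iff]
    exact forall_comm
  rw [Measure.map_apply (measurable_of_countable _) (.of_discrete), hpre]
  simp only [Measure.pi_singleton]
  exact Finset.prod_comm

lemma measurePreserving_pi_fin_add {α : Type*} [MeasurableSpace α] {m₁ m₂ : ℕ}
    (μ : Fin (m₁ + m₂) → Measure α) [∀ j, SigmaFinite (μ j)] :
    MeasurePreserving
      (fun x : Fin (m₁ + m₂) → α => (fun j => x (Fin.castAdd m₂ j), fun j => x (Fin.natAdd m₁ j)))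
      (Measure.pi μ)
      ((Measure.pi fun j => μ (Fin.castAdd m₂ j)).prod (Measure.pi fun j => μ (Fin.natAdd m₁ j))) :=
  (measurePreserving_sumPiEquivProdPi fun j => μ (finSumFinEquiv j)).comp
    (measurePreserving_piCongrLeft μ finSumFinEquiv).symm

lemma ae_pi_forall {ι : Type*} [Fintype ι] {α : ι → Type*} [∀ i, MeasurableSpace (α i)]
    {μ : ∀ i, Measure (α i)} [∀ i, SigmaFinite (μ i)] {P : ∀ i, α i → Prop}
    (h : ∀ i, ∀ᵐ a ∂μ i, P i a) : ∀ᵐ x ∂Measure.pi μ, ∀ i, P i (x i) :=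
  ae_all_iff.2 fun i => (Measure.tendsto_eval_ae_ae (i := i)).eventually (h i)

lemma one_sub_le_toReal_of_measure_compl_le {α : Type*} [MeasurableSpace α] {μ : Measure α}
    [IsProbabilityMeasure μ] {s : Set α} (hs : MeasurableSet s) {b : ℝ} (hb : 0 ≤ b)
    (h : μ sᶜ ≤ ENNReal.ofReal b) : 1 - b ≤ (μ s).toReal := by
  have hcompl : μ.real sᶜ = 1 - μ.real s := probReal_compl_eq_one_sub hs
  have hle : μ.real sᶜ ≤ b := ENNReal.toReal_le_of_le_ofReal hb h
  rw [← measureReal_def]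
  linarith

end Measure

section Spread

variable {K : Type*} [Field K] {E : Type*} [AddCommGroup E] [Module K E]

/-- A measure on a `K`-vector space is `q`-spread if every subspace of codimension `r` has measure
at most `q ^ r`. This is the only property of a random column that the rank estimate uses. -/
def IsSpread (K : Type*) [Field K] {E : Type*} [AddCommGroup E] [Module K E] [MeasurableSpace E]
    (q : ℝ≥0∞) (μ : Measure E) : Prop :=
  ∀ V : Submodule K E, μ V ≤ q ^ finrank K (E ⧸ V)

lemma exists_finset_card_eq_codim {ι : Type*} [Finite ι] (V : Submodule K (ι → K)) :
    ∃ J : Finset ι, J.card = finrank K ((ι → K) ⧸ V) ∧ ∀ v ∈ V, (∀ i ∉ J, v i = 0) → v = 0 := by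
  classical
  have := Fintype.ofFinite ι
  set w : ι → (ι → K) ⧸ V := fun i => V.mkQ (Pi.single i 1) with hw
  have hmkQ (v : ι → K) : V.mkQ v = ∑ i, v i • w i := by
    conv_lhs => rw [← (Pi.basisFun K ι).sum_repr v]
    simp only [map_sum, map_smul, Pi.basisFun_repr, Pi.basisFun_apply, hw]
  obtain ⟨J, -, -, hspan, hli⟩ :=
    exists_linearIndepOn_extension (linearIndepOn_empty K w) (Set.empty_subset Set.univ)
  lift J to Finset ι using J.toFinite
  have hJ_top : Submodule.span K (w '' J) = ⊤ := by
    refine eq_top_iff.2 fun u _ => ?_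
    obtain ⟨v, rfl⟩ := V.mkQ_surjective u
    rw [hmkQ]
    exact sum_mem fun i _ => Submodule.smul_mem _ _ (hspan ⟨i, trivial, rfl⟩)
  refine ⟨J, ?_, fun v hv hvJ => ?_⟩
  · rw [← finrank_top, ← hJ_top, Set.image_eq_range, finrank_span_eq_card hli]
    exact (Fintype.card_coe J).symm
  · have hsum : ∑ i ∈ J, v i • w i = 0 := by
      rw [Finset.sum_subset J.subset_univ fun i _ hi => by rw [hvJ i hi, zero_smul], ← hmkQ]
      exact (Submodule.Quotient.mk_eq_zero V).2 hv
    funext i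
    by_cases hi : i ∈ J
    · exact linearIndepOn_finset_iff.1 hli v hsum i hi
    · exact hvJ i hi

theorem isSpread_pi {ι : Type*} [Fintype ι] [Countable K] [MeasurableSpace K]
    [MeasurableSingletonClass K] {q : ℝ≥0∞} (μ : ι → Measure K) [∀ i, IsProbabilityMeasure (μ i)]
    (hμ : ∀ i a, μ i {a} ≤ q) : IsSpread K q (Measure.pi μ) := by
  classical
  intro V
  obtain ⟨J, hJcard, hJ⟩ := exists_finset_card_eq_codim V
  set e := MeasurableEquiv.piEquivPiSubtypeProd (fun _ : ι => K) (· ∉ J)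
  have hfiber : ∀ a, (Measure.pi fun i : {i // ¬ i ∉ J} => μ i) (Prod.mk a ⁻¹' (e.symm ⁻¹' V)) ≤
      q ^ J.card := by
    intro a
    have hsub : (Prod.mk a ⁻¹' (e.symm ⁻¹' V)).Subsingleton := by
      intro u hu w hw
      have h0 := hJ _ (V.sub_mem hu hw) fun i hi => by
        simp [e, MeasurableEquiv.piEquivPiSubtypeProd, Equiv.piEquivPiSubtypeProd, hi]
      have := e.symm.injective (sub_eq_zero.1 h0)
      exact (Prod.mk.inj this).2
    rcases hsub.eq_empty_or_singleton with h | ⟨u, h⟩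
    · simp [h]
    · rw [h, Measure.pi_singleton]
      refine (Finset.prod_le_pow_card _ _ q fun i _ => hμ _ _).trans_eq ?_
      simp
  rw [← (measurePreserving_piEquivPiSubtypeProd μ (· ∉ J)).symm.measure_preimage_equiv, ← hJcard]
  refine (measure_prod_le_of_forall_fiber_le .of_discrete .empty (b := 0) (by simp)
    fun a _ => hfiber a).trans_eq ?_
  rw [mul_zero, zero_add]

lemma finrank_quotient_eq_succ_of_notMem [FiniteDimensional K E] {V : Submodule K E} {a : E}
    (ha : a ∉ V) : finrank K (E ⧸ V) = finrank K (E ⧸ V ⊔ K ∙ a) + 1 := by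
  have hV := V.finrank_quotient_add_finrank
  have hVa := (V ⊔ K ∙ a).finrank_quotient_add_finrank
  rw [Submodule.finrank_sup_span_singleton ha] at hVa
  lia

theorem measure_pi_sup_span_ne_top_le [FiniteDimensional K E] [Countable E] [MeasurableSpace E]
    [MeasurableSingletonClass E] {q lam : ℝ≥0∞} {w : ℕ → ℝ≥0∞} (hw_one : ∀ r, 1 ≤ w r)
    (hw_step : ∀ r, q ^ (r + 1) * w (r + 1) + w r ≤ lam * w (r + 1)) {m : ℕ}
    (μ : Fin m → Measure E) [∀ j, IsProbabilityMeasure (μ j)] (hμ : ∀ j, IsSpread K q (μ j))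
    (V : Submodule K E) :
    Measure.pi μ {x | V ⊔ Submodule.span K (Set.range x) ≠ ⊤} ≤
      lam ^ m * w (finrank K (E ⧸ V)) := by
  induction m generalizing V with
  | zero => simpa using prob_le_one.trans (hw_one _)
  | succ m ih =>
    rcases eq_or_ne V ⊤ with rfl | hV
    · simp
    have := Submodule.Quotient.nontrivial_iff.2 hV
    obtain ⟨r, hr⟩ := Nat.exists_eq_add_one_of_ne_zero (finrank_pos (R := K) (M := E ⧸ V)).ne'
    set e := MeasurableEquiv.piFinSuccAbove (fun _ : Fin (m + 1) => E) 0
    set S : Set (Fin (m + 1) → E) := {x | V ⊔ Submodule.span K (Set.range x) ≠ ⊤}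
    have hfiber (a : E) : Prod.mk a ⁻¹' (e.symm ⁻¹' S) =
        {x | (V ⊔ K ∙ a) ⊔ Submodule.span K (Set.range x) ≠ ⊤} := by
      ext x
      have hcons : e.symm (a, x) = (Fin.cons a x : Fin (m + 1) → E) :=
        Fin.insertNth_zero (α := fun _ => E) a x
      simp only [S, Set.mem_preimage, Set.mem_ofPred_eq, hcons, Fin.range_cons,
        Submodule.span_insert, sup_assoc]
    have htail := ih (fun j => μ (Fin.succ j)) (fun j => hμ _)
    have hprod := measure_prod_le_of_forall_fiber_le (μ := μ 0)
      (ν := Measure.pi fun j : Fin m => μ (Fin.succ j)) (S := e.symm ⁻¹' S) .of_discrete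
      (A := V) .of_discrete (b := lam ^ m * w (r + 1)) (b' := lam ^ m * w r)
      (fun a ha => by
        have hVa : V ⊔ K ∙ a = V := by simpa using ha
        simpa only [hfiber, hVa, hr] using htail V)
      (fun a ha => by
        have hVa : finrank K (E ⧸ V ⊔ K ∙ a) = r := by
          simpa [hr] using (finrank_quotient_eq_succ_of_notMem ha).symm
        simpa only [hfiber, hVa] using htail (V ⊔ K ∙ a))
    rw [← (measurePreserving_piFinSuccAbove μ 0).symm.measure_preimage_equiv, hr]
    calc _ ≤ μ 0 V * (lam ^ m * w (r + 1)) + lam ^ m * w r := hprod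
      _ ≤ q ^ (r + 1) * (lam ^ m * w (r + 1)) + lam ^ m * w r := by
        gcongr
        exact (hμ 0 V).trans_eq (by rw [hr])
      _ = lam ^ m * (q ^ (r + 1) * w (r + 1) + w r) := by ring
      _ ≤ lam ^ m * (lam * w (r + 1)) := by gcongr; exact hw_step r
      _ = lam ^ (m + 1) * w (r + 1) := by ring

/-- A solution of `q ^ (r + 1) * w (r + 1) + w r = lam * w (r + 1)`: up to the factor `lam ^ m` it
bounds the probability that `m` random columns fail to fill up `r` missing dimensions. -/
noncomputable def corankWeight (q lam : ℝ) (r : ℕ) : ℝ :=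
  ∏ i ∈ Finset.range r, (lam - q ^ (i + 1))⁻¹

section CorankWeight

variable {q lam : ℝ}

lemma sub_le_sub_pow_succ (hq : 0 ≤ q) (hq' : q ≤ 1) (i : ℕ) : lam - q ≤ lam - q ^ (i + 1) :=
  sub_le_sub_left (pow_le_of_le_one hq hq' i.succ_ne_zero) lam

lemma corankWeight_succ (r : ℕ) (h : lam - q ^ (r + 1) ≠ 0) :
    q ^ (r + 1) * corankWeight q lam (r + 1) + corankWeight q lam r =
      lam * corankWeight q lam (r + 1) := by
  have hsucc : (lam - q ^ (r + 1)) * corankWeight q lam (r + 1) = corankWeight q lam r := by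
    rw [corankWeight, Finset.prod_range_succ, ← corankWeight]
    field_simp
  linear_combination -hsucc

lemma one_le_corankWeight (hq : 0 ≤ q) (hlt : q < lam) (hlam : lam ≤ 1) (r : ℕ) :
    1 ≤ corankWeight q lam r := by
  refine Finset.one_le_prod fun i _ => one_le_inv₀ ?_ |>.2 ?_
  · linarith [sub_le_sub_pow_succ (lam := lam) hq (hlt.le.trans hlam) i]
  · linarith [pow_nonneg hq (i + 1)]

/- Each factor is `lam⁻¹ * (1 + x)` with `x = q ^ (i + 1) / (lam - q ^ (i + 1))`, and these `x` are
dominated by a geometric series. -/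
lemma corankWeight_le (hq : 0 ≤ q) (hlt : q < lam) (hlam : lam ≤ 1) (r : ℕ) :
    corankWeight q lam r ≤ Real.exp (q / (lam - q) / (1 - q)) / lam ^ r := by
  have hq_one : q < 1 := hlt.trans_le hlam
  have hlam_pos : 0 < lam := hq.trans_lt hlt
  have hfactor (i : ℕ) : (lam - q ^ (i + 1))⁻¹ ≤
      lam⁻¹ * Real.exp (q / (lam - q) * q ^ i) := by
    have hle := sub_le_sub_pow_succ (lam := lam) hq hq_one.le i
    have hpos : 0 < lam - q ^ (i + 1) := by linarith
    calc (lam - q ^ (i + 1))⁻¹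
        = lam⁻¹ * (q ^ (i + 1) / (lam - q ^ (i + 1)) + 1) := by field_simp; ring
      _ ≤ lam⁻¹ * (q ^ (i + 1) / (lam - q) + 1) := by gcongr
      _ = lam⁻¹ * (q / (lam - q) * q ^ i + 1) := by ring
      _ ≤ lam⁻¹ * Real.exp (q / (lam - q) * q ^ i) := by gcongr; exact Real.add_one_le_exp _
  have hgeom : ∑ i ∈ Finset.range r, q ^ i ≤ (1 - q)⁻¹ := by
    rw [← tsum_geometric_of_lt_one hq hq_one]
    exact (summable_geometric_of_lt_one hq hq_one).sum_le_tsum _ fun i _ => pow_nonneg hq i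
  calc corankWeight q lam r
      ≤ ∏ i ∈ Finset.range r, lam⁻¹ * Real.exp (q / (lam - q) * q ^ i) := by
        refine Finset.prod_le_prod (fun i _ => inv_nonneg.2 ?_) fun i _ => hfactor i
        linarith [sub_le_sub_pow_succ (lam := lam) hq hq_one.le i]
    _ = Real.exp (q / (lam - q) * ∑ i ∈ Finset.range r, q ^ i) / lam ^ r := by
        rw [Finset.prod_mul_distrib, Finset.prod_const, Finset.card_range, ← Real.exp_sum,
          ← Finset.mul_sum, inv_pow, inv_mul_eq_div]
    _ ≤ Real.exp (q / (lam - q) * (1 - q)⁻¹) / lam ^ r := by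
        have : 0 ≤ lam - q := by linarith
        gcongr
    _ = Real.exp (q / (lam - q) / (1 - q)) / lam ^ r := by
        rw [div_eq_mul_inv _ (1 - q)]

end CorankWeight

theorem measure_pi_span_ne_top_le [FiniteDimensional K E] [Countable E] [MeasurableSpace E]
    [MeasurableSingletonClass E] {q lam : ℝ} (hq : 0 ≤ q) (hlt : q < lam) (hlam : lam ≤ 1) {m : ℕ}
    (μ : Fin m → Measure E) [∀ j, IsProbabilityMeasure (μ j)]
    (hμ : ∀ j, IsSpread K (ENNReal.ofReal q) (μ j)) :
    Measure.pi μ {x | Submodule.span K (Set.range x) ≠ ⊤} ≤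
      ENNReal.ofReal (Real.exp (q / (lam - q) / (1 - q)) * (lam ^ m / lam ^ finrank K E)) := by
  have hlam_pos : 0 < lam := hq.trans_lt hlt
  have hw_one := one_le_corankWeight hq hlt hlam
  have hw_nonneg (r : ℕ) : 0 ≤ corankWeight q lam r := zero_le_one.trans (hw_one r)
  have hstep (r : ℕ) : ENNReal.ofReal q ^ (r + 1) * ENNReal.ofReal (corankWeight q lam (r + 1)) +
      ENNReal.ofReal (corankWeight q lam r) ≤
        ENNReal.ofReal lam * ENNReal.ofReal (corankWeight q lam (r + 1)) := by
    rw [← ENNReal.ofReal_pow hq, ← ENNReal.ofReal_mul (by positivity),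
      ← ENNReal.ofReal_mul hlam_pos.le,
      ← ENNReal.ofReal_add (mul_nonneg (by positivity) (hw_nonneg _)) (hw_nonneg r),
      corankWeight_succ]
    linarith [sub_le_sub_pow_succ (lam := lam) hq (hlt.le.trans hlam) r]
  have h := measure_pi_sup_span_ne_top_le (fun r => ENNReal.one_le_ofReal.2 (hw_one r)) hstep μ hμ ⊥
  simp only [bot_sup_eq, (Submodule.quotEquivOfEqBot (⊥ : Submodule K E) rfl).finrank_eq] at h
  rw [← ENNReal.ofReal_pow hlam_pos.le, ← ENNReal.ofReal_mul (by positivity)] at h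
  refine h.trans (ENNReal.ofReal_le_ofReal ?_)
  calc lam ^ m * corankWeight q lam (finrank K E)
      ≤ lam ^ m * (Real.exp (q / (lam - q) / (1 - q)) / lam ^ finrank K E) := by
        gcongr
        exact corankWeight_le hq hlt hlam _
    _ = _ := by ring

end Spread

section SpansMod

variable {ι κ : Type*}

/-- The integer vectors `x j`, the columns of a matrix, span `(ℤ/pℤ)^ι` after reduction mod `p`. -/
def SpansMod (p : ℕ) (x : κ → ι → ℤ) : Prop :=
  Submodule.span (ZMod p) (Set.range fun j i => (x j i : ZMod p)) = ⊤

lemma SpansMod.of_comp {κ' : Type*} {p : ℕ} {x : κ → ι → ℤ} {a : κ' → κ}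
    (h : SpansMod p fun k => x (a k)) : SpansMod p x :=
  eq_top_iff.2 <| h.ge.trans <| Submodule.span_mono <|
    Set.range_comp_subset_range a fun j i => (x j i : ZMod p)

lemma exists_prime_smul_mem_of_isCoatom {M : Type*} [AddCommGroup M] {W : Submodule ℤ M}
    (hW : IsCoatom W) : ∃ p : ℕ, p.Prime ∧ ∀ v : M, (p : ℤ) • v ∈ W := by
  have := isSimpleModule_iff_isCoatom.2 hW
  set I := Module.annihilator ℤ (M ⧸ W)
  have hI : I.IsMaximal := IsSimpleModule.annihilator_isMaximal
  have hI_ne_bot : I ≠ ⊥ := Ring.ne_bot_of_isMaximal_of_not_isField hI Int.not_isField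
  set g := Submodule.IsPrincipal.generator I
  have hg : Prime g := Submodule.IsPrincipal.prime_generator_of_isPrime I hI_ne_bot
  have hgI : (g.natAbs : ℤ) ∈ I :=
    I.mem_of_dvd (Int.dvd_natAbs.2 dvd_rfl) (Submodule.IsPrincipal.generator_mem I)
  refine ⟨g.natAbs, Int.prime_iff_natAbs_prime.1 hg, fun v => ?_⟩
  exact (Submodule.Quotient.mk_eq_zero W).1 (Module.mem_annihilator.1 hgI (W.mkQ v))

/- A proper subgroup of `ℤ^ι` lies in a maximal one, which contains `p • ℤ^ι` for some prime `p`. -/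
theorem span_int_range_eq_top_of_forall_spansMod [Finite ι] {x : κ → ι → ℤ}
    (h : ∀ p : ℕ, p.Prime → SpansMod p x) : Submodule.span ℤ (Set.range x) = ⊤ := by
  by_contra hne
  obtain ⟨W, hW, hxW⟩ := (eq_top_or_exists_le_coatom _).resolve_left hne
  obtain ⟨p, hp, hpW⟩ := exists_prime_smul_mem_of_isCoatom hW
  set φ : (ι → ℤ) →ₗ[ℤ] ι → ZMod p := (Algebra.linearMap ℤ (ZMod p)).compLeft ι
  have hker : LinearMap.ker φ ≤ W := by
    intro v hv
    have hdvd (i : ι) : (p : ℤ) ∣ v i := by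
      rw [← ZMod.intCast_zmod_eq_zero_iff_dvd]
      exact congrFun hv i
    choose u hu using hdvd
    exact (funext hu : v = (p : ℤ) • u) ▸ hpW u
  have hmap : W.map φ = ⊤ := by
    rw [eq_top_iff, ← Submodule.restrictScalars_top ℤ (ZMod p), ← h p hp,
      Submodule.restrictScalars_span _ _ ZMod.intCast_surjective]
    refine le_trans ?_ (Submodule.map_mono hxW)
    rw [Submodule.map_span, ← Set.range_comp]
    exact le_rfl
  refine hW.1 ?_
  rw [← Submodule.comap_map_eq_self hker, hmap, Submodule.comap_top]

variable [Fintype ι]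

lemma span_range_eq_top_iff_exists_det_ne_zero [DecidableEq ι] {K : Type*} [Field K]
    {x : κ → ι → K} :
    Submodule.span K (Set.range x) = ⊤ ↔ ∃ a : ι → κ, (Matrix.of fun i => x (a i)).det ≠ 0 := by
  simp only [← isUnit_iff_ne_zero, ← Matrix.isUnit_iff_isUnit_det,
    ← Matrix.linearIndependent_rows_iff_isUnit]
  constructor
  · intro h
    obtain ⟨κ', a, -, hspan, hli⟩ := exists_linearIndependent' K x
    let b := Module.Basis.mk hli (hspan.trans h).ge
    let e : ι ≃ κ' := (Pi.basisFun K ι).indexEquiv b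
    exact ⟨a ∘ e, hli.comp e e.injective⟩
  · rintro ⟨a, ha⟩
    have hspan := ha.span_eq_top_of_card_eq_finrank' (Module.finrank_fintype_fun_eq_card K).symm
    rw [eq_top_iff, ← hspan]
    exact Submodule.span_mono (Set.range_comp_subset_range a x)

lemma spansMod_iff_exists_not_dvd_det [DecidableEq ι] {p : ℕ} (hp : p.Prime)
    {x : κ → ι → ℤ} :
    SpansMod p x ↔ ∃ a : ι → κ, ¬ (p : ℤ) ∣ (Matrix.of fun i => x (a i)).det := by
  have := Fact.mk hp
  simp only [SpansMod, span_range_eq_top_iff_exists_det_ne_zero,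
    ← ZMod.intCast_zmod_eq_zero_iff_dvd, Int.cast_det]
  rfl

lemma two_pow_card_primeFactors_le {N : ℕ} (hN : N ≠ 0) : 2 ^ N.primeFactors.card ≤ N :=
  calc 2 ^ N.primeFactors.card ≤ ∏ p ∈ N.primeFactors, p :=
        Finset.pow_card_le_prod _ _ _ fun _ hp => (Nat.prime_of_mem_primeFactors hp).two_le
    _ ≤ N := Nat.le_of_dvd (Nat.pos_of_ne_zero hN) N.prod_primeFactors_dvd

lemma natAbs_det_le_two_pow [DecidableEq ι] {M : Matrix ι ι ℤ} {L : ℕ}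
    (hM : ∀ i j, |M i j| ≤ 2 ^ L) :
    M.det.natAbs ≤ 2 ^ (Fintype.card ι * (Fintype.card ι + L)) := by
  set n := Fintype.card ι
  have hdet : M.det.natAbs ≤ n.factorial * (2 ^ L) ^ n := by
    zify
    simpa using Matrix.det_le (abv := AbsoluteValue.abs) hM
  have hfact : n.factorial ≤ (2 ^ n) ^ n :=
    n.factorial_le_pow.trans (Nat.pow_le_pow_left Nat.lt_two_pow_self.le n)
  calc M.det.natAbs ≤ (2 ^ n) ^ n * (2 ^ L) ^ n := hdet.trans (by gcongr)
    _ = 2 ^ (n * (n + L)) := by ring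

theorem SpansMod.exists_finset_forall_notMem {p : ℕ} (hp : p.Prime) {x : κ → ι → ℤ}
    (h : SpansMod p x) {L : ℕ} (hx : ∀ j i, |x j i| ≤ 2 ^ L) :
    ∃ s : Finset ℕ, s.card ≤ Fintype.card ι * (Fintype.card ι + L) ∧ (∀ ℓ ∈ s, ℓ.Prime) ∧
      ∀ ℓ : ℕ, ℓ.Prime → ℓ ∉ s → SpansMod ℓ x := by
  classical
  obtain ⟨a, ha⟩ := (spansMod_iff_exists_not_dvd_det hp).1 h
  set D := (Matrix.of fun i => x (a i)).det
  have hD_ne : D.natAbs ≠ 0 := fun h0 => ha (by simp [Int.natAbs_eq_zero.1 h0])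
  refine ⟨D.natAbs.primeFactors, ?_, fun ℓ => Nat.prime_of_mem_primeFactors, fun ℓ hℓ hmem => ?_⟩
  · exact (Nat.pow_le_pow_iff_right one_lt_two).1 <|
      (two_pow_card_primeFactors_le hD_ne).trans (natAbs_det_le_two_pow fun i => hx (a i))
  · refine (spansMod_iff_exists_not_dvd_det hℓ).2 ⟨a, fun hdvd => hmem ?_⟩
    exact Nat.mem_primeFactors.2 ⟨hℓ, Int.natCast_dvd.1 hdvd, hD_ne⟩

end SpansMod

section RandomColumns

variable {ι : Type*} [Fintype ι]

lemma isSpread_pi_map_intCast {p : ℕ} [Fact p.Prime] {q : ℝ≥0∞} (ν : ι → Measure ℤ)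
    [∀ i, IsProbabilityMeasure (ν i)] (hν : ∀ i (r : ZMod p), ν i {x : ℤ | (x : ZMod p) = r} ≤ q) :
    IsSpread (ZMod p) q (Measure.pi fun i => (ν i).map fun x : ℤ => (x : ZMod p)) := by
  have (i : ι) : IsProbabilityMeasure ((ν i).map fun x : ℤ => (x : ZMod p)) :=
    Measure.isProbabilityMeasure_map (by fun_prop)
  refine isSpread_pi _ fun i r => ?_
  rw [Measure.map_apply (by fun_prop) .of_discrete]
  exact hν i r

lemma measurePreserving_pi_pi_intCast {κ : Type*} [Fintype κ] (p : ℕ) (ν : κ → ι → Measure ℤ)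
    [∀ j i, IsProbabilityMeasure (ν j i)] :
    MeasurePreserving (fun (x : κ → ι → ℤ) j i => (x j i : ZMod p))
      (Measure.pi fun j => Measure.pi (ν j))
      (Measure.pi fun j => Measure.pi fun i => (ν j i).map fun x : ℤ => (x : ZMod p)) := by
  have (j : κ) (i : ι) : IsProbabilityMeasure ((ν j i).map fun x : ℤ => (x : ZMod p)) :=
    Measure.isProbabilityMeasure_map (by fun_prop)
  exact measurePreserving_pi _ _ fun j => measurePreserving_pi _ _ fun i =>
    Measurable.measurePreserving (by fun_prop) _

lemma measure_pi_not_spansMod_le {p : ℕ} (hp : p.Prime) {q lam : ℝ} (hq : 0 ≤ q) (hlt : q < lam)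
    (hlam : lam ≤ 1) {m : ℕ} (ν : Fin m → ι → Measure ℤ) [∀ j i, IsProbabilityMeasure (ν j i)]
    (hν : ∀ j i, IsBalanced (1 - q) (ν j i)) :
    (Measure.pi fun j => Measure.pi (ν j)) {x | ¬ SpansMod p x} ≤
      ENNReal.ofReal (Real.exp (q / (lam - q) / (1 - q)) * (lam ^ m / lam ^ Fintype.card ι)) := by
  have := Fact.mk hp
  have (j : Fin m) (i : ι) : IsProbabilityMeasure ((ν j i).map fun x : ℤ => (x : ZMod p)) :=
    Measure.isProbabilityMeasure_map (by fun_prop)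
  have hspread (j : Fin m) := isSpread_pi_map_intCast (p := p) (q := ENNReal.ofReal q) (ν j)
    fun i r => by simpa using hν j i p hp r
  have h := measure_pi_span_ne_top_le hq hlt hlam _ hspread
  rw [Module.finrank_fintype_fun_eq_card,
    ← (measurePreserving_pi_pi_intCast p ν).measure_preimage
      MeasurableSet.of_discrete.nullMeasurableSet] at h
  exact h

lemma measure_exists_prime_not_spansMod_le {κ κ' : Type*} {p₀ L : ℕ} (hp₀ : p₀.Prime)
    {x : κ → ι → ℤ} (hx : SpansMod p₀ x) (hxL : ∀ j i, |x j i| ≤ 2 ^ L)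
    {μ : Measure (κ' → ι → ℤ)} {β : ℝ≥0∞}
    (hμ : ∀ p : ℕ, p.Prime → μ {y | ¬ SpansMod p y} ≤ β) :
    μ {y | ∃ p : ℕ, p.Prime ∧ ¬ SpansMod p x ∧ ¬ SpansMod p y} ≤
      (Fintype.card ι * (Fintype.card ι + L) : ℕ) * β := by
  obtain ⟨s, hcard, hprime, hs⟩ := hx.exists_finset_forall_notMem hp₀ hxL
  have hsub : {y : κ' → ι → ℤ | ∃ p : ℕ, p.Prime ∧ ¬ SpansMod p x ∧ ¬ SpansMod p y} ⊆
      ⋃ p ∈ s, {y | ¬ SpansMod p y} := by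
    rintro y ⟨p, hp, hpx, hpy⟩
    exact Set.mem_biUnion (by_contra fun hps => hpx (hs p hp hps)) hpy
  calc μ {y | ∃ p : ℕ, p.Prime ∧ ¬ SpansMod p x ∧ ¬ SpansMod p y}
      ≤ ∑ p ∈ s, μ {y | ¬ SpansMod p y} := (measure_mono hsub).trans (measure_biUnion_finset_le _ _)
    _ ≤ s.card * β := by
      simpa using Finset.sum_le_card_nsmul s _ β fun p hp => hμ p (hprime p hp)
    _ ≤ (Fintype.card ι * (Fintype.card ι + L) : ℕ) * β := by gcongr

theorem measure_pi_span_int_ne_top_le {p₀ m₁ m₂ L : ℕ} (hp₀ : p₀.Prime)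
    (μ : Fin (m₁ + m₂) → Measure (ι → ℤ)) [∀ j, IsProbabilityMeasure (μ j)] {β₁ β₂ : ℝ≥0∞}
    (hμ : ∀ j, ∀ᵐ v ∂μ (Fin.castAdd m₂ j), ∀ i, |v i| ≤ 2 ^ L)
    (h₁ : (Measure.pi fun j => μ (Fin.castAdd m₂ j)) {x | ¬ SpansMod p₀ x} ≤ β₁)
    (h₂ : ∀ p : ℕ, p.Prime →
      (Measure.pi fun j => μ (Fin.natAdd m₁ j)) {x | ¬ SpansMod p x} ≤ β₂) :
    Measure.pi μ {x | Submodule.span ℤ (Set.range x) ≠ ⊤} ≤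
      β₁ + (Fintype.card ι * (Fintype.card ι + L) : ℕ) * β₂ := by
  set bad : Set (Fin m₁ → ι → ℤ) := {x | ¬ SpansMod p₀ x} ∪ {x | ¬ ∀ j i, |x j i| ≤ 2 ^ L}
  set fail : Set ((Fin m₁ → ι → ℤ) × (Fin m₂ → ι → ℤ)) :=
    {x | ∃ p : ℕ, p.Prime ∧ ¬ SpansMod p x.1 ∧ ¬ SpansMod p x.2}
  have hbad : (Measure.pi fun j => μ (Fin.castAdd m₂ j)) bad ≤ β₁ := by
    have hbound : ∀ᵐ x ∂Measure.pi fun j => μ (Fin.castAdd m₂ j), ∀ j i, |x j i| ≤ 2 ^ L :=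
      ae_pi_forall hμ
    refine (measure_union_le _ _).trans ?_
    rwa [ae_iff.1 hbound, add_zero]
  have hfiber : ∀ x ∉ bad, (Measure.pi fun j => μ (Fin.natAdd m₁ j)) (Prod.mk x ⁻¹' fail) ≤
      (Fintype.card ι * (Fintype.card ι + L) : ℕ) * β₂ := by
    intro x hx
    simp only [bad, Set.mem_union, Set.mem_ofPred_eq, not_or, not_not] at hx
    exact measure_exists_prime_not_spansMod_le hp₀ hx.1 hx.2 h₂
  have hsub : {x | Submodule.span ℤ (Set.range x) ≠ ⊤} ⊆
      (fun x => (fun j => x (Fin.castAdd m₂ j), fun j => x (Fin.natAdd m₁ j))) ⁻¹' fail := by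
    intro x hx
    by_contra hfail
    simp only [fail, Set.mem_preimage, Set.mem_ofPred_eq, not_exists, not_and, not_not] at hfail
    refine hx (span_int_range_eq_top_of_forall_spansMod fun p hp => ?_)
    by_cases hpx : SpansMod p fun j => x (Fin.castAdd m₂ j)
    · exact hpx.of_comp
    · exact (hfail p hp hpx).of_comp
  calc Measure.pi μ {x | Submodule.span ℤ (Set.range x) ≠ ⊤}
      ≤ _ := measure_mono hsub
    _ = _ := (measurePreserving_pi_fin_add μ).measure_preimage
      MeasurableSet.of_discrete.nullMeasurableSet
    _ ≤ _ * 1 + _ := measure_prod_le_of_forall_fiber_le .of_discrete .of_discrete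
      (fun _ _ => prob_le_one) hfiber
    _ ≤ _ := by rw [mul_one]; gcongr

end RandomColumns

section Surjective

lemma surjective_mulVecLin_iff_span_eq_top {ι κ : Type*} [Fintype κ] (x : κ → ι → ℤ) :
    Function.Surjective (Matrix.of fun i j => x j i).mulVecLin ↔
      Submodule.span ℤ (Set.range x) = ⊤ := by
  rw [← LinearMap.range_eq_top, Matrix.range_mulVecLin]
  rfl

lemma matrixLaw_not_surjective_eq {n m : ℕ} (ν : Fin n → Fin m → Measure ℤ)
    [∀ i j, IsProbabilityMeasure (ν i j)] :
    matrixLaw ν {A | ¬ Function.Surjective (Matrix.of A).mulVecLin} =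
      (Measure.pi fun j => Measure.pi fun i => ν i j)
        {x | Submodule.span ℤ (Set.range x) ≠ ⊤} := by
  rw [matrixLaw, ← (measurePreserving_swap_pi_pi ν).measure_preimage
    MeasurableSet.of_discrete.nullMeasurableSet]
  simp only [Set.preimage_ofPred_eq, surjective_mulVecLin_iff_span_eq_top, ne_eq]

lemma pow_div_pow_le_exp {lam δ : ℝ} (hlam : 0 < lam) (hlam' : lam ≤ 1) {n m : ℕ}
    (hm : (1 + δ) * n - 1 ≤ m) :
    lam ^ m / lam ^ n ≤ lam⁻¹ * Real.exp (δ * Real.log lam * n) := by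
  calc lam ^ m / lam ^ n = lam ^ ((m : ℝ) - n) := by
        rw [Real.rpow_sub hlam, Real.rpow_natCast, Real.rpow_natCast]
    _ ≤ lam ^ (-1 + δ * n) := Real.rpow_le_rpow_of_exponent_ge hlam hlam' (by linarith)
    _ = lam⁻¹ * Real.exp (δ * Real.log lam * n) := by
        rw [Real.rpow_add hlam, Real.rpow_neg_one, Real.rpow_def_of_pos hlam (δ * n)]
        ring_nf

theorem matrixLaw_not_surjective_le {q lam δ : ℝ} (hq : 0 ≤ q) (hlt : q < lam) (hlam : lam ≤ 1)
    {n m L : ℕ} (hm : (2 + δ) * n ≤ m) (ν : Fin n → Fin m → Measure ℤ)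
    [∀ i j, IsProbabilityMeasure (ν i j)] (hbal : ∀ i j, IsBalanced (1 - q) (ν i j))
    (hL : ∀ i j, ν i j {x : ℤ | 2 ^ L < |x|} = 0) :
    matrixLaw ν {A | ¬ Function.Surjective (Matrix.of A).mulVecLin} ≤
      ENNReal.ofReal ((1 + (n * (n + L) : ℕ)) * (Real.exp (q / (lam - q) / (1 - q)) *
        (lam⁻¹ * Real.exp (δ / 2 * Real.log lam * n)))) := by
  have hlam_pos : 0 < lam := hq.trans_lt hlt
  set β : ℝ := Real.exp (q / (lam - q) / (1 - q)) *
    (lam⁻¹ * Real.exp (δ / 2 * Real.log lam * n))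
  obtain ⟨m₁, m₂, rfl, hm₁, hm₂⟩ : ∃ m₁ m₂, m = m₁ + m₂ ∧ (1 + δ / 2) * n - 1 ≤ (m₁ : ℝ) ∧
      (1 + δ / 2) * n - 1 ≤ (m₂ : ℝ) := by
    have h₁ : (m : ℝ) ≤ 2 * (m / 2 : ℕ) + 1 := by exact_mod_cast (by lia : m ≤ 2 * (m / 2) + 1)
    have h₂ : (m : ℝ) ≤ 2 * (m - m / 2 : ℕ) + 1 := by
      exact_mod_cast (by lia : m ≤ 2 * (m - m / 2) + 1)
    exact ⟨m / 2, m - m / 2, by lia, by linarith, by linarith⟩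
  have hblock {m' : ℕ} (hm' : (1 + δ / 2) * n - 1 ≤ (m' : ℝ)) (e : Fin m' → Fin (m₁ + m₂)) {p : ℕ}
      (hp : p.Prime) : (Measure.pi fun j => Measure.pi fun i => ν i (e j)) {x | ¬ SpansMod p x} ≤
        ENNReal.ofReal β := by
    refine (measure_pi_not_spansMod_le hp hq hlt hlam _ fun j i => hbal i (e j)).trans ?_
    rw [Fintype.card_fin]
    exact ENNReal.ofReal_le_ofReal <| mul_le_mul_of_nonneg_left
      (pow_div_pow_le_exp hlam_pos hlam hm') (Real.exp_pos _).le
  have hentry (i j) : ∀ᵐ x ∂ν i j, |x| ≤ 2 ^ L :=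
    ae_iff.2 (by simpa only [not_le] using hL i j)
  have h := measure_pi_span_int_ne_top_le Nat.prime_two (fun j => Measure.pi fun i => ν i j)
    (fun j => ae_pi_forall fun i => hentry i (Fin.castAdd m₂ j))
    (hblock hm₁ (Fin.castAdd m₂) Nat.prime_two) (fun p hp => hblock hm₂ (Fin.natAdd m₁) hp)
  rw [matrixLaw_not_surjective_eq]
  refine h.trans_eq ?_
  rw [Fintype.card_fin, add_mul, one_mul, ENNReal.ofReal_add (by positivity) (by positivity),
    ENNReal.ofReal_mul (Nat.cast_nonneg _), ENNReal.ofReal_natCast]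

lemma isLittleO_natCast_pow_exp (k : ℕ) {a : ℝ} (ha : 0 < a) :
    (fun n : ℕ => (n : ℝ) ^ k) =o[atTop] fun n : ℕ => Real.exp (a * n) :=
  (isLittleO_pow_exp_pos_mul_atTop k ha).comp_tendsto tendsto_natCast_atTop_atTop

lemma eventually_one_add_mul_le_exp {L : ℕ → ℕ}
    (hL : ∀ a > 0, (fun n => (L n : ℝ)) =o[atTop] fun n => Real.exp (a * n)) {a : ℝ} (ha : 0 < a) :
    ∀ᶠ n : ℕ in atTop, 1 + ((n * (n + L n) : ℕ) : ℝ) ≤ Real.exp (a * n) := by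
  have ha' : 0 < a / 2 := half_pos ha
  have hid : (fun n : ℕ => (n : ℝ)) =o[atTop] fun n : ℕ => Real.exp (a / 2 * n) := by
    simpa only [pow_one] using isLittleO_natCast_pow_exp 1 ha'
  have hone : (fun _ : ℕ => (1 : ℝ)) =o[atTop] fun n : ℕ => Real.exp (a * n) := by
    simpa only [pow_zero] using isLittleO_natCast_pow_exp 0 ha
  have hmul : (fun n : ℕ => (n : ℝ) * (n + L n)) =o[atTop] fun n : ℕ => Real.exp (a * n) := by
    refine (hid.mul (hid.add (hL _ ha'))).congr_right fun n => ?_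
    rw [← Real.exp_add]
    ring_nf
  filter_upwards [(hone.add hmul).bound one_pos] with n hn
  rw [Real.norm_of_nonneg (by positivity), Real.norm_of_nonneg (by positivity), one_mul] at hn
  exact_mod_cast hn

end Surjective

theorem stmt0_general (ε δ : ℝ) (hε : 0 < ε) (hδ : 0 < δ) :
    ∃ c > (0 : ℝ), ∃ C > (0 : ℝ), ∀ L : ℕ → ℕ,
      (∀ a > 0, (fun n => (L n : ℝ)) =o[atTop] fun n => Real.exp (a * n)) →
      ∃ N : ℕ, ∀ n ≥ N, ∀ m : ℕ, (2 + δ) * n ≤ (m : ℝ) →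
        ∀ ν : Fin n → Fin m → Measure ℤ,
          (∀ i j, IsProbabilityMeasure (ν i j)) →
          (∀ i j, IsBalanced ε (ν i j)) →
          (∀ i j, ν i j {x : ℤ | (2 : ℤ) ^ L n < |x|} = 0) →
          1 - C * Real.exp (-c * n) ≤
            ((matrixLaw ν) {A | Function.Surjective (Matrix.of A).mulVecLin}).toReal := by
  obtain ⟨q, hq, hq_lt, hqε⟩ : ∃ q : ℝ, 0 ≤ q ∧ q < 1 ∧ 1 - ε ≤ q :=
    ⟨max 0 (1 - ε), le_max_left _ _, max_lt one_pos (by linarith), le_max_right _ _⟩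
  obtain ⟨lam, hq_lam, hlam_lt⟩ := exists_between hq_lt
  have hlam_pos : 0 < lam := hq.trans_lt hq_lam
  set c := -(δ / 2 * Real.log lam) / 2
  have hc : 0 < c := by
    have := mul_pos hδ (neg_pos.2 (Real.log_neg hlam_pos hlam_lt))
    simp only [c]
    linarith
  set C := Real.exp (q / (lam - q) / (1 - q)) * lam⁻¹
  refine ⟨c, hc, C, by positivity, fun L hL => ?_⟩
  obtain ⟨N, hN⟩ := eventually_atTop.1 (eventually_one_add_mul_le_exp hL hc)
  refine ⟨N, fun n hn m hm ν hν hbal hbound => ?_⟩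
  have hfail := matrixLaw_not_surjective_le hq hq_lam hlam_lt.le hm ν
    (fun i j p hp r => (hbal i j p hp r).trans (by gcongr; linarith)) hbound
  have : IsProbabilityMeasure (matrixLaw ν) := by unfold matrixLaw; infer_instance
  refine one_sub_le_toReal_of_measure_compl_le .of_discrete (by positivity)
    (hfail.trans (ENNReal.ofReal_le_ofReal ?_))
  calc (1 + ((n * (n + L n) : ℕ) : ℝ)) * (Real.exp (q / (lam - q) / (1 - q)) *
        (lam⁻¹ * Real.exp (δ / 2 * Real.log lam * n)))
      ≤ Real.exp (c * n) * (Real.exp (q / (lam - q) / (1 - q)) *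
        (lam⁻¹ * Real.exp (δ / 2 * Real.log lam * n))) := by gcongr; exact hN n hn
    _ = C * (Real.exp (c * n) * Real.exp (δ / 2 * Real.log lam * n)) := by ring
    _ = C * Real.exp (-c * n) := by rw [← Real.exp_add]; congr 2; ring

theorem stmt0 (ε δ : ℝ) (hε : 0 < ε) (hδ : 0 < δ) (k : ℕ) (hk : 1 ≤ k) :
    ∃ c > (0 : ℝ), ∃ C > (0 : ℝ), ∃ N : ℕ, ∀ n ≥ N, ∀ m : ℕ, (2 + δ) * n ≤ (m : ℝ) →
      ∀ ν : Fin n → Fin m → Measure ℤ,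
        (∀ i j, IsProbabilityMeasure (ν i j)) →
        (∀ i j, IsBalanced ε (ν i j)) →
        (∀ i j, ν i j {x : ℤ | (2 : ℤ) ^ (n ^ k) < |x|} = 0) →
        1 - C * Real.exp (-c * n) ≤
          ((matrixLaw ν) {A | Function.Surjective (Matrix.of A).mulVecLin}).toReal := by
  obtain ⟨c, hc, C, hC, h⟩ := stmt0_general ε δ hε hδ
  refine ⟨c, hc, C, hC, h (fun n => n ^ k) fun a ha => ?_⟩
  simpa only [Nat.cast_pow] using isLittleO_natCast_pow_exp k ha
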